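/- If the set of non-end folding points F \ E of a unimodal inverse limit X is nonempty, then it is dense in the set F of all folding points. -/

import Mathlib

open Set Filter Topology

/-- A unimodal map on `[0,1]` with critical point `c = 1/2`. -/
def IsUnimodal (T : ℝ → ℝ) : Prop :=
  ContinuousOn T (Set.Icc 0 1) ∧ Set.MapsTo T (Set.Icc 0 1) (Set.Icc 0 1) ∧
    StrictMonoOn T (Set.Icc 0 (1/2)) ∧ StrictAntiOn T (Set.Icc (1/2) 1)

/-- The inverse limit `lim←(K, T)`, as the space of backward orbits. -/
abbrev InvLim (T : ℝ → ℝ) (K : Set ℝ) :=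
  {x : ℕ → ℝ // (∀ n, x n ∈ K) ∧ ∀ n, T (x (n + 1)) = x n}

/-- A point `x` is an endpoint if for any two subcontinua `A`, `B` containing `x`,
either `A ⊆ B` or `B ⊆ A`. -/
def IsEndpointPt {Z : Type*} [TopologicalSpace Z] (x : Z) : Prop :=
  ∀ A B : Set Z, IsCompact A → IsConnected A → IsCompact B → IsConnected B →
    x ∈ A → x ∈ B → A ⊆ B ∨ B ⊆ A

/-- The ω-limit set of `c` under `T`. -/
def omegaSet (T : ℝ → ℝ) (c : ℝ) : Set ℝ :=
  {y | ∃ φ : ℕ → ℕ, StrictMono φ ∧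
    Filter.Tendsto (fun n => T^[φ n] c) Filter.atTop (nhds y)}

/-- Bundled working hypotheses. -/
structure UM (T : ℝ → ℝ) (c : ℝ) : Prop where
  cont : ContinuousOn T (Icc 0 1)
  maps : MapsTo T (Icc 0 1) (Icc 0 1)
  mono : StrictMonoOn T (Icc 0 c)
  anti : StrictAntiOn T (Icc c 1)
  c0 : 0 ≤ c
  c1 : c ≤ 1
  inj : Function.Injective fun n : ℕ => T^[n] c

theorem UM.itc {T : ℝ → ℝ} {c : ℝ} (h : UM T c) (k : ℕ) : ContinuousOn (T^[k]) (Icc 0 1) :=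
  h.cont.iterate h.maps k

theorem UM.itm {T : ℝ → ℝ} {c : ℝ} (h : UM T c) (k : ℕ) : MapsTo (T^[k]) (Icc 0 1) (Icc 0 1) :=
  h.maps.iterate k

theorem UM.cm {T : ℝ → ℝ} {c : ℝ} (h : UM T c) : c ∈ Icc (0:ℝ) 1 := ⟨h.c0, h.c1⟩

theorem UM.ne {T : ℝ → ℝ} {c : ℝ} (h : UM T c) {m n : ℕ} (hmn : m ≠ n) :
    T^[m] c ≠ T^[n] c := fun e => hmn (h.inj e)

theorem mem_omega_iff {T : ℝ → ℝ} {a y : ℝ} :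
    y ∈ omegaSet T a ↔ ∀ ε > 0, ∀ N : ℕ, ∃ n ≥ N, |T^[n] a - y| < ε := by
  constructor
  · rintro ⟨φ, hφ, hl⟩ ε hε N
    obtain ⟨M, hM⟩ := Metric.tendsto_atTop.1 hl ε hε
    refine ⟨φ (max M N), le_trans (le_max_right M N) (hφ.id_le _), ?_⟩
    have := hM (max M N) (le_max_left _ _)
    rwa [Real.dist_eq] at this
  · intro h
    have : MapClusterPt y atTop (fun n : ℕ => T^[n] a) := by
      rw [(Metric.nhds_basis_ball (x := y)).mapClusterPt_iff_frequently]
      intro ε hε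
      rw [frequently_atTop]
      intro N
      obtain ⟨n, hn, hh⟩ := h ε hε N
      exact ⟨n, hn, by rwa [Metric.mem_ball, Real.dist_eq]⟩
    obtain ⟨ψ, h1, h2⟩ := MapClusterPt.tendsto_subseq this
    exact ⟨ψ, h1, h2⟩

theorem tendsto_iter {T : ℝ → ℝ} {c : ℝ} (h : UM T c) {u : ℕ → ℝ} {w : ℝ}
    (hu : ∀ n, u n ∈ Icc (0:ℝ) 1) (hw : Tendsto u atTop (𝓝 w)) (k : ℕ) :
    Tendsto (fun n => T^[k] (u n)) atTop (𝓝 (T^[k] w)) := by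
  have hwm : w ∈ Icc (0:ℝ) 1 := isClosed_Icc.mem_of_tendsto hw (Eventually.of_forall hu)
  exact (h.itc k w hwm).tendsto.comp
    (tendsto_nhdsWithin_iff.2 ⟨hw, Eventually.of_forall hu⟩)

theorem omega_mem {T : ℝ → ℝ} {c : ℝ} (h : UM T c) {a y : ℝ} (ha : a ∈ Icc (0:ℝ) 1)
    (hy : y ∈ omegaSet T a) : y ∈ Icc (0:ℝ) 1 := by
  obtain ⟨φ, -, hl⟩ := hy
  exact isClosed_Icc.mem_of_tendsto hl (Eventually.of_forall fun n => h.itm _ ha)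

theorem omega_iter {T : ℝ → ℝ} {c : ℝ} (h : UM T c) {a y : ℝ} (ha : a ∈ Icc (0:ℝ) 1)
    (hy : y ∈ omegaSet T a) (k : ℕ) : T^[k] y ∈ omegaSet T a := by
  obtain ⟨φ, hφ, hl⟩ := hy
  refine ⟨fun n => k + φ n, fun i j hij => by have := hφ hij; simpa using this, ?_⟩
  have := tendsto_iter h (fun n => h.itm (φ n) ha) hl k
  simpa [Function.iterate_add_apply] using this

theorem omega_sub {T : ℝ → ℝ} {c : ℝ} (h : UM T c) {y : ℝ}
    (hy : y ∈ omegaSet T c) : omegaSet T y ⊆ omegaSet T c := by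
  intro v hv
  rw [mem_omega_iff] at hv ⊢
  intro ε hε N
  obtain ⟨n, -, hn⟩ := hv (ε/2) (by positivity) 0
  obtain ⟨ψ, h1, h2⟩ := omega_iter h h.cm hy n
  obtain ⟨m, hm, hh⟩ := mem_omega_iff.1 (omega_iter h h.cm hy n) (ε/2) (by positivity) N
  refine ⟨m, hm, ?_⟩
  calc |T^[m] c - v| = |(T^[m] c - T^[n] y) + (T^[n] y - v)| := by ring_nf
    _ ≤ _ := abs_add_le _ _
    _ < ε := by linarith

/-- Backward orbits as limits of pieces of forward orbits. -/
theorem back {T : ℝ → ℝ} {c : ℝ} (h : UM T c) {a : ℝ} (ha : a ∈ Icc (0:ℝ) 1)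
    (t : ℕ → ℕ) (ht : Tendsto t atTop atTop) :
    ∃ (ψ : ℕ → ℕ) (x : InvLim T (Icc 0 1)), StrictMono ψ ∧
      (∀ j, Tendsto (fun i => T^[t (ψ i) - j] a) atTop (𝓝 (x.1 j))) ∧
      ∀ j, x.1 j ∈ omegaSet T a := by
  have hK : IsCompact (Set.univ.pi fun _ : ℕ => Icc (0:ℝ) 1) :=
    isCompact_univ_pi fun _ => isCompact_Icc
  obtain ⟨x, hx, ψ, hψ, hl⟩ := hK.tendsto_subseq (x := fun i j => T^[t i - j] a)
    (fun i j _ => h.itm _ ha)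
  have hl' : ∀ j, Tendsto (fun i => T^[t (ψ i) - j] a) atTop (𝓝 (x j)) :=
    fun j => (tendsto_pi_nhds.1 hl) j
  have htψ : Tendsto (fun i => t (ψ i)) atTop atTop := ht.comp hψ.tendsto_atTop
  refine ⟨ψ, ⟨x, fun n => hx n trivial, fun n => ?_⟩, hψ, hl', fun j => ?_⟩
  · have h1 := tendsto_iter h (fun i => h.itm (t (ψ i) - (n+1)) ha) (hl' (n+1)) 1
    refine tendsto_nhds_unique h1 ((hl' n).congr' ?_)
    filter_upwards [htψ.eventually_ge_atTop (n+1)] with i hi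
    rw [← Function.iterate_add_apply]
    congr 2; omega
  · rw [mem_omega_iff]
    intro ε hε N
    have e1 := (Metric.tendsto_nhds.1 (hl' j)) ε hε
    obtain ⟨i, h1, h2⟩ := (e1.and (htψ.eventually_ge_atTop (N + j))).exists
    exact ⟨t (ψ i) - j, by omega, by rwa [Real.dist_eq] at h1⟩

/-- The shift. -/
def shf {T : ℝ → ℝ} {c : ℝ} (h : UM T c) (x : InvLim T (Icc 0 1)) : InvLim T (Icc 0 1) :=
  ⟨fun n => Nat.casesOn n (T (x.1 0)) x.1, by
    constructor
    · rintro (_ | n)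
      · exact h.maps (x.2.1 0)
      · exact x.2.1 n
    · rintro (_ | n)
      · rfl
      · exact x.2.2 n⟩

theorem shf_cont {T : ℝ → ℝ} {c : ℝ} (h : UM T c) : Continuous (shf h) := by
  refine Continuous.subtype_mk (continuous_pi ?_) _
  rintro (_ | n)
  · exact h.cont.comp_continuous ((continuous_apply 0).comp continuous_subtype_val) fun x => x.2.1 0
  · exact (continuous_apply n).comp continuous_subtype_val

theorem shf_inj {T : ℝ → ℝ} {c : ℝ} (h : UM T c) : Function.Injective (shf h) := by
  intro x y hxy
  apply Subtype.ext
  funext n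
  exact congrFun (congrArg Subtype.val hxy) (n+1)

theorem shf_end {T : ℝ → ℝ} {c : ℝ} (h : UM T c) {x : InvLim T (Icc 0 1)}
    (hx : ¬ IsEndpointPt x) : ¬ IsEndpointPt (shf h x) := by
  intro he
  apply hx
  intro A B hA hA' hB hB' xA xB
  have := he (shf h '' A) (shf h '' B) (hA.image (shf_cont h)) (hA'.image _ (shf_cont h).continuousOn)
    (hB.image (shf_cont h)) (hB'.image _ (shf_cont h).continuousOn) ⟨x, xA, rfl⟩ ⟨x, xB, rfl⟩
  rwa [image_subset_image_iff (shf_inj h), image_subset_image_iff (shf_inj h)] at this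

theorem shf_iter_end {T : ℝ → ℝ} {c : ℝ} (h : UM T c) {x : InvLim T (Icc 0 1)}
    (hx : ¬ IsEndpointPt x) (k : ℕ) : ¬ IsEndpointPt ((shf h)^[k] x) := by
  induction k with
  | zero => exact hx
  | succ k ih => rw [Function.iterate_succ_apply']; exact shf_end h ih

theorem shf_iter_add {T : ℝ → ℝ} {c : ℝ} (h : UM T c) (x : InvLim T (Icc 0 1)) (k n : ℕ) :
    ((shf h)^[k] x).1 (k + n) = x.1 n := by
  induction k with
  | zero => simp
  | succ k ih =>
    rw [Function.iterate_succ_apply', show k + 1 + n = (k + n) + 1 by omega]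
    exact ih

theorem inv_iter {T : ℝ → ℝ} (x : InvLim T (Icc 0 1)) (j n : ℕ) :
    T^[j] (x.1 (n + j)) = x.1 n := by
  induction j with
  | zero => rfl
  | succ j ih => rw [Function.iterate_succ_apply, ← add_assoc, x.2.2, ih]

theorem inv_omega {T : ℝ → ℝ} {c : ℝ} (h : UM T c) {x : InvLim T (Icc 0 1)} (N : ℕ)
    (hx : ∀ n, x.1 (N + n) ∈ omegaSet T c) (n : ℕ) : x.1 n ∈ omegaSet T c := by
  have := omega_iter h h.cm (hx n) N
  rwa [add_comm N n, inv_iter] at this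

/-- basic neighbourhoods -/
theorem basic_nhds {T : ℝ → ℝ} {c : ℝ} (h : UM T c) (y : InvLim T (Icc 0 1))
    (W : Set (InvLim T (Icc 0 1))) (hW : W ∈ 𝓝 y) :
    ∃ n, ∃ ε > 0, ∀ x : InvLim T (Icc 0 1), |x.1 n - y.1 n| < ε → x ∈ W := by
  rw [nhds_subtype_eq_comap, mem_comap] at hW
  obtain ⟨V, hV, hVW⟩ := hW
  rw [nhds_pi, Filter.mem_pi] at hV
  obtain ⟨I, hI, t, ht, hts⟩ := hV
  obtain ⟨M, hM⟩ := hI.bddAbove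
  have key : ∀ i ∈ I, ∀ᶠ v in 𝓝[Icc 0 1] (y.1 M), T^[M - i] v ∈ t i := by
    intro i hi
    have hc := h.itc (M - i) (y.1 M) (y.2.1 M)
    have e : T^[M - i] (y.1 M) = y.1 i := by
      have := inv_iter y (M - i) i
      rwa [show i + (M - i) = M by have := hM hi; omega] at this
    apply hc.tendsto
    rw [e]; exact ht i
  have key2 := (eventually_all_finite hI).2 key
  rw [eventually_nhdsWithin_iff] at key2
  obtain ⟨ε, hε, hh⟩ := Metric.eventually_nhds_iff.1 key2
  refine ⟨M, ε, hε, fun x hx => hVW (hts ?_)⟩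
  intro i hi
  have := hh (y := x.1 M) (by rwa [Real.dist_eq]) (x.2.1 M) i hi
  have e : T^[M - i] (x.1 M) = x.1 i := by
    have := inv_iter x (M - i) i
    rwa [show i + (M - i) = M by have := hM hi; omega] at this
  rwa [e] at this

theorem strict_alt {T : ℝ → ℝ} {c : ℝ} (h : UM T c) {P : Set ℝ} (hP : P ⊆ Icc 0 1)
    (hs : ∀ j : ℕ, (∀ v ∈ P, T^[j] v ≤ c) ∨ (∀ v ∈ P, c ≤ T^[j] v)) (n : ℕ) :
    StrictMonoOn (T^[n]) P ∨ StrictAntiOn (T^[n]) P := by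
  induction n with
  | zero => left; intro a _ b _ hab; simpa using hab
  | succ n ih =>
    have hm : ∀ v ∈ P, T^[n] v ∈ Icc (0:ℝ) 1 := fun v hv => h.itm n (hP hv)
    rcases hs n with h1 | h1
    · have hh : MapsTo (T^[n]) P (Icc 0 c) := fun v hv => ⟨(hm v hv).1, h1 v hv⟩
      rw [Function.iterate_succ']
      rcases ih with h2 | h2
      · exact Or.inl (h.mono.comp h2 hh)
      · exact Or.inr (h.mono.comp_strictAntiOn h2 hh)
    · have hh : MapsTo (T^[n]) P (Icc c 1) := fun v hv => ⟨h1 v hv, (hm v hv).2⟩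
      rw [Function.iterate_succ']
      rcases ih with h2 | h2
      · exact Or.inr (h.anti.comp_strictMonoOn h2 hh)
      · exact Or.inl (h.anti.comp h2 hh)

theorem conv_lim {T : ℝ → ℝ} {c : ℝ} (h : UM T c) {P : Set ℝ} (hP : P ⊆ Icc 0 1)
    (hs : ∀ j : ℕ, (∀ v ∈ P, T^[j] v ≤ c) ∨ (∀ v ∈ P, c ≤ T^[j] v)) (k : ℕ)
    (hk : MapsTo (T^[k]) P P) {i : ℕ} (hi : T^[i] c ∈ P) :
    ∃ p, Tendsto (fun m : ℕ => T^[i + 2 * k * m] c) atTop (𝓝 p) := by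
  set S : ℝ → ℝ := T^[k] ∘ T^[k] with hS
  have hSP : MapsTo S P P := hk.comp hk
  have hSm : MonotoneOn S P := by
    rcases strict_alt h hP hs k with h1 | h1
    · exact (h1.comp h1 hk).monotoneOn
    · exact (h1.comp h1 hk).monotoneOn
  have hmem : ∀ m, S^[m] (T^[i] c) ∈ P := fun m => hSP.iterate m hi
  have heq : ∀ m, T^[i + 2 * k * m] c = S^[m] (T^[i] c) := by
    intro m
    rw [hS, ← Function.iterate_add, ← Function.iterate_mul, ← Function.iterate_add_apply,
      show (k + k) * m + i = i + 2 * k * m by ring]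
  simp_rw [heq]
  have hb : ∀ m, S^[m] (T^[i] c) ∈ Icc (0:ℝ) 1 := fun m => hP (hmem m)
  rcases le_total (T^[i] c) (S (T^[i] c)) with h1 | h1
  · have hm : Monotone fun m => S^[m] (T^[i] c) := by
      apply monotone_nat_of_le_succ
      intro n
      induction n with
      | zero => simpa using h1
      | succ n ih =>
        have := hSm (hmem n) (hmem (n+1)) ih
        rwa [Function.iterate_succ_apply' S n, Function.iterate_succ_apply' S (n+1)]
    exact ⟨_, tendsto_atTop_ciSup hm ⟨1, by rintro _ ⟨m, rfl⟩; exact (hb m).2⟩⟩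
  · have hm : Antitone fun m => S^[m] (T^[i] c) := by
      apply antitone_nat_of_succ_le
      intro n
      induction n with
      | zero => simpa using h1
      | succ n ih =>
        have := hSm (hmem (n+1)) (hmem n) ih
        rwa [Function.iterate_succ_apply' S n, Function.iterate_succ_apply' S (n+1)]
    exact ⟨_, tendsto_atTop_ciInf hm ⟨0, by rintro _ ⟨m, rfl⟩; exact (hb m).1⟩⟩

theorem per {T : ℝ → ℝ} {c : ℝ} (h : UM T c) {i q : ℕ} (hq : 0 < q) {p : ℝ}
    (hp : Tendsto (fun m : ℕ => T^[i + q * m] c) atTop (𝓝 p)) :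
    T^[q] p = p ∧ ∀ y ∈ omegaSet T c, ∃ t < q, y = T^[t] p := by
  have hl : ∀ t, Tendsto (fun m : ℕ => T^[t] (T^[i + q * m] c)) atTop (𝓝 (T^[t] p)) :=
    fun t => tendsto_iter h (fun m => h.itm _ h.cm) hp t
  refine ⟨?_, fun y hy => ?_⟩
  · refine tendsto_nhds_unique (hl q) ((hp.comp (tendsto_add_atTop_nat 1)).congr fun m => ?_)
    simp only [Function.comp]
    rw [← Function.iterate_add_apply, show q + (i + q * m) = i + q * (m + 1) by ring]
  · set R : Set ℝ := (fun t => T^[t] p) '' (Iio q) with hR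
    have hRc : IsClosed R := ((finite_Iio q).image _).isClosed
    have : y ∈ closure R := by
      rw [Metric.mem_closure_iff]
      intro ε hε
      have e1 : ∀ᶠ m in atTop, ∀ t ∈ Iio q, dist (T^[t] (T^[i + q * m] c)) (T^[t] p) < ε/2 :=
        (eventually_all_finite (finite_Iio q)).2 fun t _ =>
          Metric.tendsto_nhds.1 (hl t) (ε/2) (by positivity)
      obtain ⟨M, hM⟩ := eventually_atTop.1 e1
      obtain ⟨n, hn, hny⟩ := mem_omega_iff.1 hy (ε/2) (by positivity) (i + q * M)
      have hlt := Nat.mod_lt (n - i) hq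
      have hdm := Nat.mod_add_div (n - i) q
      refine ⟨_, ⟨(n - i) % q, hlt, rfl⟩, ?_⟩
      have hMm : M ≤ (n - i) / q := by
        rw [Nat.le_div_iff_mul_le hq, mul_comm]; omega
      have h3 := hM _ hMm _ hlt
      rw [← Function.iterate_add_apply, show (n - i) % q + (i + q * ((n - i) / q)) = n by omega] at h3
      rw [← Real.dist_eq, dist_comm] at hny
      calc dist y _ ≤ _ := dist_triangle y (T^[n] c) _
        _ < ε := by simp only at h3 ⊢; linarith
    rw [hRc.closure_eq] at this
    obtain ⟨t, ht, e⟩ := this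
    exact ⟨t, ht, e.symm⟩

/-- Context of the main lemma. -/
structure Ctx {T : ℝ → ℝ} (c : ℝ) (x : InvLim T (Icc 0 1)) (z r : ℝ) : Prop where
  xo : ∀ n, x.1 n ∈ omegaSet T c
  zo : z ∈ omegaSet T c
  r0 : 0 < r
  far : ∀ n, 1 ≤ n → r ≤ |x.1 n - z|

theorem conv_false {T : ℝ → ℝ} {c : ℝ} (h : UM T c) {x : InvLim T (Icc 0 1)} {z r : ℝ}
    (hx : Ctx c x z r) {P : Set ℝ} (hP : P ⊆ Icc 0 1)
    (hs : ∀ j : ℕ, (∀ v ∈ P, T^[j] v ≤ c) ∨ (∀ v ∈ P, c ≤ T^[j] v)) (k : ℕ) (hk0 : 0 < k)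
    (hk : MapsTo (T^[k]) P P) {i : ℕ} (hi : T^[i] c ∈ P) : False := by
  obtain ⟨p, hp⟩ := conv_lim h hP hs k hk hi
  obtain ⟨h1, h2⟩ := per h (q := 2 * k) (by omega) hp
  set q := 2 * k with hq
  obtain ⟨s, hs, hzs⟩ := h2 z hx.zo
  obtain ⟨t, ht, hxt⟩ := h2 _ (hx.xo (2 * q + 1))
  have e := inv_iter x (s + q - t) (2 * q + 1 - (s + q - t))
  rw [show 2 * q + 1 - (s + q - t) + (s + q - t) = 2 * q + 1 by omega, hxt,
    ← Function.iterate_add_apply, show s + q - t + t = s + q by omega,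
    Function.iterate_add_apply, h1, ← hzs] at e
  have := hx.far (2 * q + 1 - (s + q - t)) (by omega)
  rw [← e] at this
  have := hx.r0
  simp at *
  linarith

theorem sided_inv {T : ℝ → ℝ} {c : ℝ} {P : Set ℝ} (hm : MapsTo T P P)
    (hs : (∀ v ∈ P, v ≤ c) ∨ (∀ v ∈ P, c ≤ v)) (j : ℕ) :
    (∀ v ∈ P, T^[j] v ≤ c) ∨ (∀ v ∈ P, c ≤ T^[j] v) := by
  rcases hs with h | h
  · exact Or.inl fun v hv => h _ (hm.iterate j hv)
  · exact Or.inr fun v hv => h _ (hm.iterate j hv)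

theorem um_top {T : ℝ → ℝ} {c : ℝ} (h : UM T c) {v : ℝ} (hv : v ∈ Icc (0:ℝ) 1) : T v ≤ T c := by
  rcases le_total v c with h1 | h1
  · exact h.mono.monotoneOn ⟨hv.1, h1⟩ ⟨h.c0, le_rfl⟩ h1
  · exact h.anti.antitoneOn ⟨le_rfl, h.c1⟩ ⟨h1, hv.2⟩ h1

theorem core {T : ℝ → ℝ} {c : ℝ} (h : UM T c) {x : InvLim T (Icc 0 1)} {z r : ℝ}
    (hx : Ctx c x z r) : T (T c) < c ∧ c < T c ∧ T (T c) < T (T (T c)) := by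
  have c1m := h.maps h.cm
  have c2m := h.maps c1m
  have A : c < T c := by
    by_contra hlt
    push Not at hlt
    refine conv_false h hx (P := Icc 0 c) (Icc_subset_Icc_right h.c1) (sided_inv ?_ (Or.inl fun v hv => hv.2))
      1 one_pos ?_ (i := 0) ⟨h.c0, le_rfl⟩
    · exact fun v hv => ⟨(h.maps ⟨hv.1, hv.2.trans h.c1⟩).1,
        (um_top h ⟨hv.1, hv.2.trans h.c1⟩).trans hlt⟩
    · exact fun v hv => ⟨(h.maps ⟨hv.1, hv.2.trans h.c1⟩).1,
        (um_top h ⟨hv.1, hv.2.trans h.c1⟩).trans hlt⟩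
  have B : T (T c) < c := by
    by_contra hlt
    push Not at hlt
    have hm : MapsTo T (Icc c (T c)) (Icc c (T c)) := by
      intro v hv
      have hv1 : v ∈ Icc (0:ℝ) 1 := ⟨h.c0.trans hv.1, hv.2.trans c1m.2⟩
      exact ⟨hlt.trans (h.anti.antitoneOn ⟨hv.1, hv1.2⟩ ⟨A.le, c1m.2⟩ hv.2), um_top h hv1⟩
    exact conv_false h hx (P := Icc c (T c)) (Icc_subset_Icc h.c0 c1m.2)
      (sided_inv hm (Or.inr fun v hv => hv.1)) 1 one_pos hm (i := 0) ⟨le_rfl, A.le⟩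
  refine ⟨B, A, ?_⟩
  by_contra hlt
  push Not at hlt
  have hm : MapsTo T (Icc 0 (T (T c))) (Icc 0 (T (T c))) := by
    intro v hv
    have hv1 : v ∈ Icc (0:ℝ) 1 := ⟨hv.1, hv.2.trans c2m.2⟩
    exact ⟨(h.maps hv1).1, (h.mono.monotoneOn ⟨hv.1, hv.2.trans B.le⟩ ⟨c2m.1, B.le⟩ hv.2).trans hlt⟩
  exact conv_false h hx (P := Icc 0 (T (T c))) (Icc_subset_Icc_right c2m.2)
      (sided_inv hm (Or.inl fun v hv => hv.2.trans B.le)) 1 one_pos hm (i := 2) ⟨c2m.1, le_rfl⟩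

theorem three_pick (g : ℕ → Prop) (hg : ∀ N : ℕ, ∃ n ≥ N, g n) (d : ℕ → Prop) :
    ∃ i j, i < j ∧ g i ∧ g j ∧ (d i ↔ d j) := by
  obtain ⟨a, -, ha⟩ := hg 0
  obtain ⟨b, hab, hb⟩ := hg (a + 1)
  obtain ⟨e, hbe, he⟩ := hg (b + 1)
  by_cases h1 : d a <;> by_cases h2 : d b <;> by_cases h3 : d e
  · exact ⟨a, b, by omega, ha, hb, by tauto⟩
  · exact ⟨a, b, by omega, ha, hb, by tauto⟩
  · exact ⟨a, e, by omega, ha, he, by tauto⟩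
  · exact ⟨b, e, by omega, hb, he, by tauto⟩
  · exact ⟨b, e, by omega, hb, he, by tauto⟩
  · exact ⟨a, e, by omega, ha, he, by tauto⟩
  · exact ⟨a, b, by omega, ha, hb, by tauto⟩
  · exact ⟨a, b, by omega, ha, hb, by tauto⟩

theorem sided_of_preconn {S : Set ℝ} (hS : IsPreconnected S) {c : ℝ} (hc : c ∉ S) :
    (∀ v ∈ S, v ≤ c) ∨ (∀ v ∈ S, c ≤ v) := by
  by_contra hcon
  push Not at hcon
  obtain ⟨⟨a, ha, hac⟩, ⟨b, hb, hbc⟩⟩ := hcon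
  exact hc (hS.ordConnected.out hb ha ⟨hbc.le, hac.le⟩)

theorem wand {T : ℝ → ℝ} {c : ℝ} (h : UM T c) {x : InvLim T (Icc 0 1)} {z r : ℝ}
    (hx : Ctx c x z r)
    (hQ : ∀ N : ℕ, ∃ n ≥ N, T^[3] c ≤ x.1 n ∧ ∀ j < n,
      (∀ v ∈ Icc (T^[3] c) (x.1 n), T^[j] v ≤ c) ∨ (∀ v ∈ Icc (T^[3] c) (x.1 n), c ≤ T^[j] v)) :
    False := by
  set e := T^[3] c with he
  have hem : e ∈ Icc (0:ℝ) 1 := h.itm 3 h.cm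
  obtain ⟨φ, hφ, hφQ⟩ := extraction_of_frequently_atTop (frequently_atTop.2 hQ)
  obtain ⟨w, hw, ψ, hψ, hl⟩ := isCompact_Icc.tendsto_subseq (x := fun i => x.1 (φ i))
    (fun i => x.2.1 (φ i))
  set θ := φ ∘ ψ with hθ
  have hθm : StrictMono θ := hφ.comp hψ
  have hθQ : ∀ i, e ≤ x.1 (θ i) ∧ ∀ j < θ i,
      (∀ v ∈ Icc e (x.1 (θ i)), T^[j] v ≤ c) ∨ (∀ v ∈ Icc e (x.1 (θ i)), c ≤ T^[j] v) :=
    fun i => hφQ (ψ i)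
  have hl : Tendsto (fun i => x.1 (θ i)) atTop (𝓝 w) := hl
  have hθt := hθm.tendsto_atTop
  have hew : e ≤ w := ge_of_tendsto' hl fun i => (hθQ i).1
  have hfar : ∀ j, r ≤ |T^[j] w - z| := by
    intro j
    have h1 := tendsto_iter h (fun i => x.2.1 (θ i)) hl j
    refine ge_of_tendsto ((h1.sub_const z).abs) ?_
    filter_upwards [hθt.eventually_ge_atTop (j + 1)] with i hi
    have := inv_iter x j (θ i - j)
    rw [show θ i - j + j = θ i by omega] at this
    rw [this]
    exact hx.far _ (by omega)
  have hnear : ∀ ε > 0, ∀ N : ℕ, ∃ n ≥ N, |T^[n] e - z| < ε := by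
    intro ε hε N
    obtain ⟨n, hn, hh⟩ := mem_omega_iff.1 hx.zo ε hε (N + 3)
    refine ⟨n - 3, by omega, ?_⟩
    rw [he, ← Function.iterate_add_apply, show n - 3 + 3 = n by omega]
    exact hh
  have hew : e < w := by
    refine lt_of_le_of_ne hew fun heq => ?_
    obtain ⟨n, -, hn⟩ := hnear r hx.r0 0
    have := hfar n
    rw [← heq] at this
    linarith
  set K := Ico e w with hK
  have hKI : K ⊆ Icc 0 1 := fun v hv => ⟨hem.1.trans hv.1, hv.2.le.trans hw.2⟩
  have hKe : e ∈ K := ⟨le_rfl, hew⟩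
  have hside : ∀ j : ℕ, (∀ v ∈ K, T^[j] v ≤ c) ∨ (∀ v ∈ K, c ≤ T^[j] v) := by
    intro j
    by_contra hcon
    push Not at hcon
    obtain ⟨⟨a, ha, hac⟩, ⟨b, hb, hbc⟩⟩ := hcon
    obtain ⟨i, ⟨hi1, hi2⟩, hi3⟩ := (((hl.eventually (lt_mem_nhds ha.2)).and
      (hl.eventually (lt_mem_nhds hb.2))).and (hθt.eventually_gt_atTop j)).exists
    rcases (hθQ i).2 j hi3 with h1 | h1
    · have := h1 a ⟨ha.1, hi1.le⟩; linarith
    · have := h1 b ⟨hb.1, hi2.le⟩; linarith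
  have hno : ∀ j, ∀ v ∈ K, T^[j] v ≠ c := by
    intro j v hv hvc
    have hev : e < v := by
      refine lt_of_le_of_ne hv.1 fun heq => ?_
      rw [← heq, he, ← Function.iterate_add_apply] at hvc
      exact h.ne (m := j + 3) (n := 0) (by omega) hvc
    obtain ⟨v', hv1, hv2⟩ := exists_between hv.2
    have hv' : v' ∈ K := ⟨hv.1.trans hv1.le, hv2⟩
    rcases strict_alt h hKI hside j with h1 | h1
    · have a1 := h1 hKe hv hev
      have a2 := h1 hv hv' hv1
      rcases hside j with h2 | h2
      · have := h2 _ hv'; linarith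
      · have := h2 _ hKe; linarith
    · have a1 := h1 hKe hv hev
      have a2 := h1 hv hv' hv1
      rcases hside j with h2 | h2
      · have := h2 _ hKe; linarith
      · have := h2 _ hv'; linarith
  have hr := hx.r0
  -- two images of `K` meet
  obtain ⟨i, j, hij, hi, hj, hd⟩ := three_pick (fun n => |T^[n] e - z| < r / 2)
    (hnear (r/2) (by positivity)) (fun n => z < T^[n] w)
  have hivt : ∀ n y, (T^[n] e < y ∧ y < T^[n] w ∨ T^[n] w < y ∧ y < T^[n] e) → ∃ v ∈ K, T^[n] v = y := by
    intro n y hy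
    have hsub : Icc e w ⊆ Icc 0 1 := Icc_subset_Icc hem.1 hw.2
    have hc := (h.itc n).mono hsub
    have : y ∈ T^[n] '' Icc e w := by
      rcases hy with hy | hy
      · exact intermediate_value_Icc hew.le hc ⟨hy.1.le, hy.2.le⟩
      · exact intermediate_value_Icc' hew.le hc ⟨hy.1.le, hy.2.le⟩
    obtain ⟨v, hv, hvy⟩ := this
    refine ⟨v, ⟨hv.1, lt_of_le_of_ne hv.2 ?_⟩, hvy⟩
    rintro rfl
    rcases hy with hy | hy <;> linarith [hy.1, hy.2]
  have hmeet : ∃ u ∈ K, ∃ v ∈ K, T^[i] u = T^[j] v := by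
    rw [abs_lt] at hi hj
    have fi := hfar i
    have fj := hfar j
    by_cases hz : z < T^[i] w
    · have hz' := hd.1 hz
      rw [abs_of_pos (by linarith)] at fi fj
      obtain ⟨u, hu, hu'⟩ := hivt i (z + r/2) (Or.inl ⟨by linarith, by linarith⟩)
      obtain ⟨v, hv, hv'⟩ := hivt j (z + r/2) (Or.inl ⟨by linarith, by linarith⟩)
      exact ⟨u, hu, v, hv, hu'.trans hv'.symm⟩
    · have hz' : ¬ z < T^[j] w := fun hh => hz (hd.2 hh)
      rw [abs_of_nonpos (by linarith)] at fi fj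
      obtain ⟨u, hu, hu'⟩ := hivt i (z - r/2) (Or.inr ⟨by linarith, by linarith⟩)
      obtain ⟨v, hv, hv'⟩ := hivt j (z - r/2) (Or.inr ⟨by linarith, by linarith⟩)
      exact ⟨u, hu, v, hv, hu'.trans hv'.symm⟩
  obtain ⟨u, hu, v, hv, huv⟩ := hmeet
  obtain ⟨k, rfl⟩ : ∃ k, j = k + i := ⟨j - i, by omega⟩
  have hk0 : 0 < k := by omega
  set P : Set ℝ := ⋃ m : ℕ, T^[k * m + i] '' K with hPdef
  have hPI : P ⊆ Icc 0 1 := by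
    intro y hy
    obtain ⟨m, y', hy', rfl⟩ := mem_iUnion.1 hy
    exact h.itm _ (hKI hy')
  have hPc : IsPreconnected P := by
    apply IsPreconnected.iUnion_of_chain
    · intro m
      exact isPreconnected_Ico.image _ ((h.itc _).mono hKI)
    · intro m
      refine ⟨T^[k * m] (T^[i] u), ⟨u, hu, ?_⟩, ⟨v, hv, ?_⟩⟩
      · rw [Function.iterate_add_apply]
      · rw [huv, ← Function.iterate_add_apply, show k * m + (k + i) = k * (m + 1) + i by ring]
        rfl
  have hPs : ∀ n : ℕ, (∀ v ∈ P, T^[n] v ≤ c) ∨ (∀ v ∈ P, c ≤ T^[n] v) := by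
    intro n
    have h1 : IsPreconnected (T^[n] '' P) := hPc.image _ ((h.itc n).mono hPI)
    have h2 : c ∉ T^[n] '' P := by
      rintro ⟨y, hy, hyc⟩
      obtain ⟨m, y', hy', rfl⟩ := mem_iUnion.1 hy
      rw [← Function.iterate_add_apply] at hyc
      exact hno _ _ hy' hyc
    rcases sided_of_preconn h1 h2 with h3 | h3
    · exact Or.inl fun v hv => h3 _ ⟨v, hv, rfl⟩
    · exact Or.inr fun v hv => h3 _ ⟨v, hv, rfl⟩
  have hPk : MapsTo (T^[k]) P P := by
    intro y hy
    obtain ⟨m, y', hy', rfl⟩ := mem_iUnion.1 hy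
    refine mem_iUnion.2 ⟨m + 1, y', hy', ?_⟩
    rw [← Function.iterate_add_apply, show k + (k * m + i) = k * (m + 1) + i by ring]
  refine conv_false h hx hPI hPs k hk0 hPk (i := i + 3) (mem_iUnion.2 ⟨0, e, hKe, ?_⟩)
  rw [he, ← Function.iterate_add_apply, show k * 0 + i + 3 = i + 3 by ring]

theorem invlim_compact {T : ℝ → ℝ} {c : ℝ} (h : UM T c) : CompactSpace (InvLim T (Icc 0 1)) := by
  refine (isCompact_iff_compactSpace
    (s := {x : ℕ → ℝ | (∀ n, x n ∈ Icc (0:ℝ) 1) ∧ ∀ n, T (x (n + 1)) = x n})).1 ?_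
  refine (isCompact_univ_pi fun _ : ℕ => isCompact_Icc (a := (0:ℝ)) (b := 1)).of_isClosed_subset ?_
    (fun x hx n _ => hx.1 n)
  apply IsSeqClosed.isClosed
  intro u x hu hl
  have hl' := tendsto_pi_nhds.1 hl
  refine ⟨fun n => isClosed_Icc.mem_of_tendsto (hl' n) (Eventually.of_forall fun i => (hu i).1 n),
    fun n => ?_⟩
  have h1 := tendsto_iter h (fun i => (hu i).1 (n+1)) (hl' (n+1)) 1
  refine tendsto_nhds_unique h1 ((hl' n).congr fun i => ?_)
  exact ((hu i).2 n).symm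

/-- two points on the same side of `c` -/
def SameSide (c p q : ℝ) : Prop := (p ≤ c ∧ q ≤ c) ∨ (c ≤ p ∧ c ≤ q)

theorem uIcc_sub {p q : ℝ} (hp : p ∈ Icc (0:ℝ) 1) (hq : q ∈ Icc (0:ℝ) 1) : uIcc p q ⊆ Icc 0 1 :=
  fun _ hv => ⟨(le_inf hp.1 hq.1).trans hv.1, hv.2.trans (sup_le hp.2 hq.2)⟩

theorem side_bij {T : ℝ → ℝ} {c : ℝ} (h : UM T c) {p q : ℝ} (hp : p ∈ Icc (0:ℝ) 1)
    (hq : q ∈ Icc (0:ℝ) 1) (hs : SameSide c p q) :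
    BijOn T (uIcc p q) (uIcc (T p) (T q)) := by
  have hsub := uIcc_sub hp hq
  have hsurj : SurjOn T (uIcc p q) (uIcc (T p) (T q)) := intermediate_value_uIcc (h.cont.mono hsub)
  rcases hs with hs | hs
  · have hsub' : uIcc p q ⊆ Icc 0 c := fun v hv => ⟨(hsub hv).1, hv.2.trans (sup_le hs.1 hs.2)⟩
    have hm := h.mono.mono hsub'
    exact ⟨hm.monotoneOn.mapsTo_uIcc, hm.injOn, hsurj⟩
  · have hsub' : uIcc p q ⊆ Icc c 1 := fun v hv => ⟨(le_inf hs.1 hs.2).trans hv.1, (hsub hv).2⟩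
    have hm := h.anti.mono hsub'
    exact ⟨hm.antitoneOn.mapsTo_uIcc, hm.injOn, hsurj⟩

theorem arc {T : ℝ → ℝ} {c : ℝ} (h : UM T c) (x u : InvLim T (Icc 0 1))
    (hs : ∀ n, SameSide c (x.1 (n+1)) (u.1 (n+1))) :
    IsCompact {y : InvLim T (Icc 0 1) | ∀ n, y.1 n ∈ uIcc (x.1 n) (u.1 n)} ∧
    IsConnected {y : InvLim T (Icc 0 1) | ∀ n, y.1 n ∈ uIcc (x.1 n) (u.1 n)} := by
  have := invlim_compact h
  set A := {y : InvLim T (Icc 0 1) | ∀ n, y.1 n ∈ uIcc (x.1 n) (u.1 n)} with hA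
  have hbij : ∀ n, BijOn T (uIcc (x.1 (n+1)) (u.1 (n+1))) (uIcc (x.1 n) (u.1 n)) := by
    intro n
    have := side_bij h (x.2.1 (n+1)) (u.2.1 (n+1)) (hs n)
    rwa [x.2.2, u.2.2] at this
  have hev : ∀ n, Continuous fun y : InvLim T (Icc 0 1) => y.1 n :=
    fun n => (continuous_apply n).comp continuous_subtype_val
  have hAc : IsClosed A := by
    rw [hA, ofPred_forall]
    exact isClosed_iInter fun n => isClosed_Icc.preimage (hev n)
  have hAk : IsCompact A := hAc.isCompact
  refine ⟨hAk, ⟨x, fun n => left_mem_uIcc⟩, ?_⟩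
  have : CompactSpace A := isCompact_iff_compactSpace.1 hAk
  let f : A → ℝ := fun y => y.1.1 0
  have hf : Continuous f := (hev 0).comp continuous_subtype_val
  have hfi : Function.Injective f := by
    intro y y' hyy
    apply Subtype.ext; apply Subtype.ext
    funext n
    induction n with
    | zero => exact hyy
    | succ n ih =>
      apply (hbij n).injOn (y.2 (n+1)) (y'.2 (n+1))
      rw [y.1.2.2, y'.1.2.2, ih]
  have hrange : uIcc (x.1 0) (u.1 0) ⊆ range f := by
    intro t ht
    have hex : ∀ n, ∀ t : uIcc (x.1 n) (u.1 n), ∃ t' : uIcc (x.1 (n+1)) (u.1 (n+1)),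
        T t'.1 = t.1 := by
      intro n t
      obtain ⟨t', h1, h2⟩ := (hbij n).surjOn t.2
      exact ⟨⟨t', h1⟩, h2⟩
    choose g hg using hex
    let s : (n : ℕ) → uIcc (x.1 n) (u.1 n) := fun n => Nat.rec ⟨t, ht⟩ (fun n v => g n v) n
    refine ⟨⟨⟨fun n => (s n).1, fun n => uIcc_sub (x.2.1 n) (u.2.1 n) (s n).2, fun n => hg n (s n)⟩,
      fun n => (s n).2⟩, rfl⟩
  have hpre : IsPreconnected (f ⁻¹' (uIcc (x.1 0) (u.1 0))) :=
    isPreconnected_uIcc.preimage_of_isClosedMap hfi hf.isClosedMap hrange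
  have huniv : f ⁻¹' (uIcc (x.1 0) (u.1 0)) = univ := by
    ext y; simp only [mem_preimage, mem_univ, iff_true]; exact y.2 0
  rw [huniv] at hpre
  have := hpre.image (Subtype.val : A → InvLim T (Icc 0 1)) continuous_subtype_val.continuousOn
  rwa [image_univ, Subtype.range_coe] at this

theorem fail {T : ℝ → ℝ} {c : ℝ} (h : UM T c) {x : InvLim T (Icc 0 1)}
    (hcore : T (T c) < c ∧ c < T c ∧ T (T c) < T (T (T c)))
    (hxC : ∀ n, x.1 n ∈ Icc (T (T c)) (T c)) {b : ℝ} (hb : b ∈ Icc (T (T c)) (T c))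
    (hno : ¬ ∃ u : InvLim T (Icc 0 1), u.1 0 = b ∧ ∀ n, SameSide c (x.1 (n+1)) (u.1 (n+1))) :
    ∃ n, (T^[3] c ≤ x.1 n ∧ ∀ j < n,
      (∀ v ∈ Icc (T^[3] c) (x.1 n), T^[j] v ≤ c) ∨ (∀ v ∈ Icc (T^[3] c) (x.1 n), c ≤ T^[j] v)) ∧
      |T^[n] (T^[3] c) - x.1 0| ≤ |b - x.1 0| := by
  obtain ⟨hc2, hc1, hc3⟩ := hcore
  have m1 := h.maps h.cm
  have m2 := h.maps m1
  have hCI : Icc (T (T c)) (T c) ⊆ Icc 0 1 := Icc_subset_Icc m2.1 m1.2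
  let Side : ℕ → Set ℝ := fun n => {v | v ∈ Icc (T (T c)) (T c) ∧ SameSide c (x.1 n) v}
  have hgex : ∀ (n : ℕ) (v : ℝ), ∃ w, (∃ v' ∈ Side (n+1), T v' = v) → w ∈ Side (n+1) ∧ T w = v := by
    intro n v
    by_cases hh : ∃ v' ∈ Side (n+1), T v' = v
    · obtain ⟨v', hv'⟩ := hh
      exact ⟨v', fun _ => hv'⟩
    · exact ⟨0, fun hh' => absurd hh' hh⟩
  choose g hg using hgex
  let u : ℕ → ℝ := fun n => Nat.rec b (fun n v => g n v) n
  have hu0 : u 0 = b := rfl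
  have hus : ∀ n, (∃ v' ∈ Side (n+1), T v' = u n) → u (n+1) ∈ Side (n+1) ∧ T (u (n+1)) = u n :=
    fun n hh => hg n (u n) hh
  have hex : ∃ n, ¬ ∃ v' ∈ Side (n+1), T v' = u n := by
    by_contra hall
    push Not at hall
    apply hno
    refine ⟨⟨u, ?_, fun n => (hus n (hall n)).2⟩, hu0, fun n => (hus n (hall n)).1.2⟩
    rintro (_ | n)
    · exact hCI hb
    · exact hCI (hus n (hall n)).1.1
  obtain ⟨n, hfail, hmin⟩ : ∃ n, (¬ ∃ v' ∈ Side (n+1), T v' = u n) ∧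
      ∀ j < n, ¬ ¬ ∃ v' ∈ Side (j+1), T v' = u j := by
    classical
    exact ⟨Nat.find hex, Nat.find_spec hex, fun j hj => Nat.find_min hex hj⟩
  have hgood : ∀ j < n, u (j+1) ∈ Side (j+1) ∧ T (u (j+1)) = u j := by
    intro j hj
    exact hus j (not_not.1 (hmin j hj))
  have huC : ∀ j ≤ n, u j ∈ Icc (T (T c)) (T c) := by
    rintro (_ | j) hj
    · exact hb
    · exact (hgood j (by omega)).1.1
  have hunC := huC n le_rfl
  have hxl : x.1 (n+1) < c := by
    by_contra hge
    push Not at hge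
    apply hfail
    obtain ⟨v, hv, hvu⟩ := intermediate_value_Icc' hc1.le
      (h.cont.mono (Icc_subset_Icc h.c0 m1.2)) hunC
    exact ⟨v, ⟨⟨hc2.le.trans hv.1, hv.2⟩, Or.inr ⟨hge, hv.1⟩⟩, hvu⟩
  have hu3 : u n < T (T (T c)) := by
    by_contra hge
    push Not at hge
    apply hfail
    obtain ⟨v, hv, hvu⟩ := intermediate_value_Icc hc2.le
      (h.cont.mono (Icc_subset_Icc m2.1 h.c1)) ⟨hge, hunC.2⟩
    exact ⟨v, ⟨⟨hv.1, hv.2.trans hc1.le⟩, Or.inl ⟨hxl.le, hv.2⟩⟩, hvu⟩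
  have hx3 : T (T (T c)) ≤ x.1 n := by
    rw [← x.2.2 n]
    exact h.mono.monotoneOn ⟨m2.1, hc2.le⟩ ⟨(x.2.1 _).1, hxl.le⟩ (hxC _).1
  have hiter : ∀ j ≤ n, ∀ v ∈ uIcc (x.1 n) (u n), T^[j] v ∈ uIcc (x.1 (n-j)) (u (n-j)) := by
    intro j
    induction j with
    | zero => intro _ v hv; simpa using hv
    | succ j ih =>
      intro hj v hv
      have h1 := ih (by omega) v hv
      obtain ⟨m, hm⟩ : ∃ m, n - j = m + 1 := ⟨n - j - 1, by omega⟩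
      have hm' : n - (j+1) = m := by omega
      rw [hm] at h1
      rw [hm', Function.iterate_succ_apply']
      obtain ⟨g1, g2⟩ := hgood m (by omega)
      have := (side_bij h (x.2.1 (m+1)) (hCI g1.1) g1.2).mapsTo h1
      rwa [x.2.2, g2] at this
  have hsub : Icc (T^[3] c) (x.1 n) ⊆ uIcc (x.1 n) (u n) := by
    rw [uIcc_of_ge (hu3.le.trans hx3)]
    exact Icc_subset_Icc_left hu3.le
  refine ⟨n, ⟨hx3, fun j hj => ?_⟩, ?_⟩
  · obtain ⟨m, hm⟩ : ∃ m, n - j = m + 1 := ⟨n - j - 1, by omega⟩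
    have hside := (hgood m (by omega)).1.2
    have hv : ∀ v ∈ Icc (T^[3] c) (x.1 n), T^[j] v ∈ uIcc (x.1 (m+1)) (u (m+1)) := by
      intro v hv
      have := hiter j hj.le v (hsub hv)
      rwa [hm] at this
    rcases hside with hs | hs
    · exact Or.inl fun v hv' => (hv v hv').2.trans (sup_le hs.1 hs.2)
    · exact Or.inr fun v hv' => (le_inf hs.1 hs.2).trans (hv v hv').1
  · have := hiter n le_rfl (T^[3] c) (hsub ⟨le_rfl, hx3⟩)
    rw [Nat.sub_self, hu0] at this
    exact abs_sub_left_of_mem_uIcc this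

theorem omega_core {T : ℝ → ℝ} {c : ℝ} (h : UM T c)
    (hcore : T (T c) < c ∧ c < T c ∧ T (T c) < T (T (T c))) {y : ℝ} (hy : y ∈ omegaSet T c) :
    y ∈ Icc (T (T c)) (T c) := by
  obtain ⟨hc2, hc1, hc3⟩ := hcore
  have m1 := h.maps h.cm
  have m2 := h.maps m1
  have hm : MapsTo T (Icc (T (T c)) (T c)) (Icc (T (T c)) (T c)) := by
    intro v hv
    refine ⟨?_, um_top h ⟨m2.1.trans hv.1, hv.2.trans m1.2⟩⟩
    rcases le_total v c with h1 | h1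
    · exact hc3.le.trans (h.mono.monotoneOn ⟨m2.1, hc2.le⟩ ⟨m2.1.trans hv.1, h1⟩ hv.1)
    · exact h.anti.antitoneOn ⟨h1, hv.2.trans m1.2⟩ ⟨hc1.le, m1.2⟩ hv.2
  obtain ⟨φ, -, hl⟩ := hy
  exact isClosed_Icc.mem_of_tendsto hl (Eventually.of_forall fun n => hm.iterate _ ⟨hc2.le, hc1.le⟩)

theorem main0 {T : ℝ → ℝ} {c : ℝ} (h : UM T c) {x : InvLim T (Icc 0 1)} {z r : ℝ}
    (hx : Ctx c x z r) (hx0 : ∀ s, T^[s] c ≠ x.1 0) : ¬ IsEndpointPt x := by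
  have hcore := core h hx
  have hxC : ∀ n, x.1 n ∈ Icc (T (T c)) (T c) := fun n => omega_core h hcore (hx.xo n)
  have claim : ∃ ε > 0, ∀ b ∈ Icc (T (T c)) (T c), |b - x.1 0| < ε →
      ∃ u : InvLim T (Icc 0 1), u.1 0 = b ∧ ∀ n, SameSide c (x.1 (n+1)) (u.1 (n+1)) := by
    by_contra hcon
    push Not at hcon
    apply wand h hx
    intro N
    have e1 : ∀ᶠ ε in 𝓝[>] (0:ℝ), ∀ n ∈ Iio N, ε < |T^[n] (T^[3] c) - x.1 0| := by
      refine (eventually_all_finite (finite_Iio N)).2 fun n _ => ?_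
      refine nhdsWithin_le_nhds (gt_mem_nhds (abs_pos.2 (sub_ne_zero.2 ?_)))
      rw [← Function.iterate_add_apply]
      exact hx0 _
    obtain ⟨ε, hε, hε0⟩ := (e1.and self_mem_nhdsWithin).exists
    obtain ⟨b, hb, hbε, hno⟩ := hcon ε hε0
    obtain ⟨n, hn, hle⟩ := fail h hcore hxC hb (by push Not; exact hno)
    refine ⟨n, ?_, hn⟩
    by_contra hlt
    push Not at hlt
    have := hε n hlt
    linarith
  obtain ⟨ε, hε, hcl⟩ := claim
  have hlt1 : x.1 0 < T c := lt_of_le_of_ne (hxC 0).2 (hx0 1).symm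
  have hlt2 : T (T c) < x.1 0 := lt_of_le_of_ne (hxC 0).1 (hx0 2)
  obtain ⟨b, hb1, hb2⟩ := exists_between (lt_min hlt1 (show x.1 0 < x.1 0 + ε by linarith))
  obtain ⟨a, ha1, ha2⟩ := exists_between (max_lt hlt2 (show x.1 0 - ε < x.1 0 by linarith))
  rw [lt_min_iff] at hb2
  rw [max_lt_iff] at ha1
  obtain ⟨u, hu0, hu⟩ := hcl b ⟨by linarith, hb2.1.le⟩ (by rw [abs_lt]; constructor <;> linarith)
  obtain ⟨v, hv0, hv⟩ := hcl a ⟨ha1.1.le, by linarith⟩ (by rw [abs_lt]; constructor <;> linarith)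
  intro hend
  obtain ⟨k1, k2⟩ := arc h x u hu
  obtain ⟨k3, k4⟩ := arc h x v hv
  rcases hend _ _ k1 k2 k3 k4 (fun n => left_mem_uIcc) (fun n => left_mem_uIcc) with hh | hh
  · have h1 := hh (show u ∈ _ from fun n => right_mem_uIcc) 0
    rw [hu0, hv0, uIcc_of_ge ha2.le] at h1
    linarith [h1.2]
  · have h1 := hh (show v ∈ _ from fun n => right_mem_uIcc) 0
    rw [hu0, hv0, uIcc_of_le hb1.le] at h1
    linarith [h1.1]

theorem main1 {T : ℝ → ℝ} {c : ℝ} (h : UM T c) {x : InvLim T (Icc 0 1)} {z r : ℝ}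
    (hx : Ctx c x z r) : ¬ IsEndpointPt x := by
  have hN : ∃ N, ∀ s, T^[s] c ≠ x.1 N := by
    by_cases h0 : ∀ s, T^[s] c ≠ x.1 0
    · exact ⟨0, h0⟩
    · push Not at h0
      obtain ⟨s, hs⟩ := h0
      refine ⟨s + 1, fun t ht => ?_⟩
      have := inv_iter x (s+1) 0
      rw [zero_add, ← ht, ← hs, ← Function.iterate_add_apply] at this
      exact h.ne (m := s + 1 + t) (n := s) (by omega) this
  obtain ⟨N, hN⟩ := hN
  let y : InvLim T (Icc 0 1) := ⟨fun n => x.1 (N + n), fun n => x.2.1 _, fun n => x.2.2 (N + n)⟩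
  have hy : Ctx c y z r := ⟨fun n => hx.xo _, hx.zo, hx.r0, fun n hn => hx.far _ (by omega)⟩
  have h1 := shf_iter_end h (main0 h hy hN) N
  have h2 : (shf h)^[N] y = x := by
    apply Subtype.ext
    funext n
    have a1 := shf_iter_add h y N n
    have a2 := inv_iter ((shf h)^[N] y) N n
    rw [add_comm n N, a1] at a2
    rw [← a2]
    have := inv_iter x N n
    rw [← this, add_comm n N]
  rwa [h2] at h1

/-- In the non-minimal case there are many good backward orbits. -/
theorem dense_good {T : ℝ → ℝ} {c : ℝ} (h : UM T c) {y z ε : ℝ} (hy : y ∈ omegaSet T c)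
    (hz : z ∈ omegaSet T c) (hε : 0 < ε) (hfar : ∀ k, ε ≤ |T^[k] y - z|)
    {t : ℝ} (ht : t ∈ omegaSet T c) {δ : ℝ} (hδ : 0 < δ) :
    ∃ (x : InvLim T (Icc 0 1)) (z' r : ℝ), Ctx c x z' r ∧ |x.1 0 - t| < δ := by
  have hyI := omega_mem h h.cm hy
  by_cases hcase : ∃ v ∈ omegaSet T y, |v - t| < δ
  · obtain ⟨v, ⟨φ, hφ, hl⟩, hvt⟩ := hcase
    obtain ⟨ψ, x, hψ, hx, hxo⟩ := back h hyI φ hφ.tendsto_atTop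
    have h0 : x.1 0 = v := tendsto_nhds_unique (hx 0) (hl.comp hψ.tendsto_atTop)
    refine ⟨x, z, ε, ⟨fun n => omega_sub h hy (hxo n), hz, hε, fun n _ => ?_⟩, by rwa [h0]⟩
    exact ge_of_tendsto' (((hx n).sub_const z).abs) fun i => hfar _
  · push Not at hcase
    obtain ⟨_, x0, -, -, hx0⟩ := back h hyI id tendsto_id
    set a := x0.1 0 with ha
    have haΩ : a ∈ omegaSet T y := hx0 0
    have hao := omega_sub h hy haΩ
    have haI := omega_mem h h.cm hao
    have hafar : ∀ k, δ ≤ |T^[k] a - t| := fun k => hcase _ (omega_iter h hyI haΩ k)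
    have key : ∀ N : ℕ, ∃ s, 2 * N ≤ s ∧ |T^[s] c - t| < δ / 2 ∧
        ∀ j, 1 ≤ j → j ≤ N → δ / 2 ≤ |T^[s - j] c - t| := by
      intro N
      have e1 : ∀ᶠ v in 𝓝[Icc 0 1] a, ∀ k ∈ Iic N, δ / 2 < |T^[k] v - t| := by
        refine (eventually_all_finite (finite_Iic N)).2 fun k _ => ?_
        have hc : Tendsto (fun v => |T^[k] v - t|) (𝓝[Icc 0 1] a) (𝓝 |T^[k] a - t|) :=
          ((h.itc k a haI).tendsto.sub_const t).abs
        exact hc.eventually (lt_mem_nhds (by linarith [hafar k]))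
      rw [eventually_nhdsWithin_iff] at e1
      obtain ⟨η, hη, hh⟩ := Metric.eventually_nhds_iff.1 e1
      obtain ⟨m, hm, hma⟩ := mem_omega_iff.1 hao η hη N
      have hclose : ∀ k ≤ N, δ / 2 < |T^[m + k] c - t| := by
        intro k hk
        have := hh (y := T^[m] c) (by rwa [Real.dist_eq]) (h.itm m h.cm) k hk
        rwa [← Function.iterate_add_apply, add_comm] at this
      have hex : ∃ s, m ≤ s ∧ |T^[s] c - t| < δ / 2 := by
        obtain ⟨s, h1, h2⟩ := mem_omega_iff.1 ht (δ/2) (by positivity) m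
        exact ⟨s, h1, h2⟩
      obtain ⟨s, ⟨hs1, hs2⟩, hmin⟩ : ∃ s, (m ≤ s ∧ |T^[s] c - t| < δ / 2) ∧
          ∀ j < s, ¬ (m ≤ j ∧ |T^[j] c - t| < δ / 2) := by
        classical
        exact ⟨Nat.find hex, Nat.find_spec hex, fun j hj => Nat.find_min hex hj⟩
      have hsN : m + N < s := by
        by_contra hlt
        push Not at hlt
        have := hclose (s - m) (by omega)
        rw [show m + (s - m) = s by omega] at this
        linarith
      refine ⟨s, by omega, hs2, fun j hj1 hj2 => ?_⟩
      by_contra hlt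
      push Not at hlt
      exact hmin (s - j) (by omega) ⟨by omega, hlt⟩
    choose s hs1 hs2 hs3 using key
    have hst : Tendsto s atTop atTop :=
      tendsto_atTop_mono (fun n => by have := hs1 n; simp only [id]; omega) tendsto_id
    obtain ⟨ψ, x, hψ, hx, hxo⟩ := back h h.cm s hst
    refine ⟨x, t, δ / 2, ⟨hxo, ht, by positivity, fun n hn => ?_⟩, ?_⟩
    · refine ge_of_tendsto (((hx n).sub_const t).abs) ?_
      filter_upwards [hψ.tendsto_atTop.eventually_ge_atTop n] with i hi
      exact hs3 _ n hn hi
    · have : |x.1 0 - t| ≤ δ / 2 :=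
        le_of_tendsto' (((hx 0).sub_const t).abs) fun i => (hs2 (ψ i)).le
      linarith

/-- If the set `F \ E` of non-end folding points of a unimodal inverse
limit `X` is nonempty, then it is dense in the set `F` of all folding points. -/
theorem stmt13 (T : ℝ → ℝ) (c : ℝ) (hc : c = 1/2) (hT : IsUnimodal T)
    (hinf : Function.Injective fun n : ℕ => T^[n] c)
    (E F : Set (InvLim T (Set.Icc 0 1)))
    (hE : E = {x : InvLim T (Set.Icc 0 1) | IsEndpointPt x})
    (hF : F = {x : InvLim T (Set.Icc 0 1) | ∀ n, x.1 n ∈ omegaSet T c})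
    (hne : (F \ E).Nonempty) :
    F ⊆ closure (F \ E) := by
  have h : UM T c := ⟨hT.1, hT.2.1, by rw [hc]; exact hT.2.2.1, by rw [hc]; exact hT.2.2.2,
    by rw [hc]; norm_num, by rw [hc]; norm_num, hinf⟩
  subst hE hF
  intro y hy
  rw [mem_closure_iff_nhds]
  intro W hW
  obtain ⟨n, δ, hδ, hWn⟩ := basic_nhds h y W hW
  -- it suffices to find a good point whose zeroth coordinate is close to `y n`
  have suff : ∀ x : InvLim T (Icc 0 1), (∀ m, x.1 m ∈ omegaSet T c) → ¬ IsEndpointPt x →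
      ∀ k, |T^[k] (x.1 0) - y.1 n| < δ → (W ∩ ({x : InvLim T (Set.Icc 0 1) | ∀ n, x.1 n ∈ omegaSet T c} \
        {x : InvLim T (Set.Icc 0 1) | IsEndpointPt x})).Nonempty := by
    intro x hxo hxe k hk
    refine ⟨(shf h)^[n + k] x, hWn _ ?_, ?_, shf_iter_end h hxe _⟩
    · have a1 := shf_iter_add h x (n + k) 0
      have a2 := inv_iter ((shf h)^[n + k] x) k n
      rw [add_zero] at a1
      rw [a1] at a2
      rwa [← a2]
    · exact inv_omega h (n + k) (fun m => by rw [shf_iter_add]; exact hxo m)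
  by_cases hmin : ∀ v ∈ omegaSet T c, ∀ z ∈ omegaSet T c, ∀ ε > 0, ∃ k, |T^[k] v - z| < ε
  · obtain ⟨x, hxF, hxE⟩ := hne
    obtain ⟨k, hk⟩ := hmin _ (hxF 0) _ (hy n) δ hδ
    exact suff x hxF hxE k hk
  · push Not at hmin
    obtain ⟨v, hv, z, hz, ε, hε, hfar⟩ := hmin
    obtain ⟨x, z', r, hctx, hclose⟩ := dense_good h hv hz hε hfar (hy n) hδ
    exact suff x hctx.xo (main1 h hctx) 0 hclose
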